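/- Hartogs–Siciak extension in ℓ∞: let f : ℓ∞ × ℓ∞ → ℂ be analytic on B(0,1) × B(0,1), where B(0,1) denotes the open unit ball of ℓ∞. Suppose there exist z1 ∈ ℓ∞ and β1 > 0 with B(z1, β1) ⊆ B(0,1) such that for every z ∈ B(z1, β1) there is a function g_z : ℓ∞ → ℂ analytic on all of ℓ∞ with g_z(w) = f(z, w) for every w ∈ B(0,1). Then there exists F : ℓ∞ × ℓ∞ → ℂ analytic on B(0,1) × ℓ∞ with F(z, w) = f(z, w) for every (z, w) ∈ B(0,1) × B(0,1). -/

import Mathlib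

section HSAll
open Metric Set Filter Topology
open scoped ENNReal

section HS
variable {X : Type*} [NormedAddCommGroup X] [NormedSpace ℂ X]

lemma hs_iteratedDeriv_line {h : X → ℂ} {U : Set X} (hU : IsOpen U) (hh : AnalyticOnNhd ℂ h U)
    (x y : X) (j : ℕ) : ∀ t : ℂ, x + t • y ∈ U →
    iteratedDeriv j (fun t : ℂ => h (x + t • y)) t
      = iteratedFDeriv ℂ j h (x + t • y) (fun _ => y) := by
  induction j with
  | zero => intro t ht; simp
  | succ j ih =>
    intro t ht
    rw [iteratedDeriv_succ, iteratedFDeriv_succ_apply_left]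
    have hline : HasDerivAt (fun t : ℂ => x + t • y) y t := by
      simpa using ((hasDerivAt_id t).smul_const y).const_add x
    have hev : iteratedDeriv j (fun t : ℂ => h (x + t • y)) =ᶠ[𝓝 t]
        fun t => iteratedFDeriv ℂ j h (x + t • y) (fun _ => y) := by
      have : ∀ᶠ s in 𝓝 t, x + s • y ∈ U :=
        hline.continuousAt.eventually (hU.mem_nhds ht)
      filter_upwards [this] with s hs using ih s hs
    rw [hev.deriv_eq]
    have hd : HasFDerivAt (iteratedFDeriv ℂ j h) (fderiv ℂ (iteratedFDeriv ℂ j h) (x + t • y))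
        (x + t • y) := ((hh.iteratedFDeriv j) _ ht).differentiableAt.hasFDerivAt
    have h1 := hd.comp_hasDerivAt t hline
    have h2 := (ContinuousMultilinearMap.apply ℂ (fun _ : Fin j => X) ℂ
      (fun _ => y)).hasFDerivAt.comp_hasDerivAt t h1
    exact h2.deriv

lemma hs_norm_iteratedFDeriv {h : X → ℂ} {x0 : X} {r M : ℝ} (hr : 0 < r) (hM : 0 < M)
    (hh : AnalyticOnNhd ℂ h (ball x0 r)) (hb : ∀ x ∈ ball x0 r, ‖h x‖ ≤ M) (j : ℕ) :
    ‖iteratedFDeriv ℂ j h x0‖ ≤ M * (6 * j / r) ^ j := by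
  rcases Nat.eq_zero_or_pos j with rfl | hj
  · simpa using hb x0 (mem_ball_self hr)
  have hj' : (0:ℝ) < j := by exact_mod_cast hj
  have key : ∀ i : ℕ, i ≤ j → ∀ x ∈ ball x0 (r - i * (r / (2 * j))),
      ‖iteratedFDeriv ℂ i h x‖ ≤ M * (6 * j / r) ^ i := by
    intro i
    induction i with
    | zero => intro _ x hx; simpa using hb x (by simpa using hx)
    | succ i ih =>
      intro hi x hx
      rw [← norm_fderiv_iteratedFDeriv]
      have hs : 0 < r / (2 * j) := by positivity
      have hsub : ball x (r / (2 * j)) ⊆ ball x0 (r - i * (r / (2 * j))) := by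
        apply ball_subset_ball'
        have := mem_ball.1 hx
        push_cast at this
        linarith
      have hsub2 : ball x0 (r - i * (r / (2 * j))) ⊆ ball x0 r :=
        ball_subset_ball (by have : 0 ≤ i * (r / (2 * j)) := by positivity
                             linarith)
      have hQ : 0 < M * (6 * j / r) ^ i := by positivity
      have hb' := ih (by omega)
      have := Complex.norm_fderiv_le_div_of_mapsTo_ball (f := iteratedFDeriv ℂ i h) (c := x)
        (R₁ := r / (2 * j)) (R₂ := 3 * (M * (6 * j / r) ^ i))
        (((hh.iteratedFDeriv i).mono (hsub.trans hsub2)).differentiableOn) ?_ hs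
      · refine this.trans (le_of_eq ?_)
        rw [pow_succ]; field_simp; norm_num
      · intro y hy
        rw [mem_closedBall, dist_eq_norm]
        have h1 := hb' y (hsub hy)
        have h2 := hb' x (hsub (mem_ball_self hs))
        have h3 := norm_sub_le (iteratedFDeriv ℂ i h y) (iteratedFDeriv ℂ i h x)
        linarith
  refine key j le_rfl x0 (mem_ball_self ?_)
  have : (j:ℝ) * (r / (2 * j)) = r / 2 := by field_simp
  rw [this]; linarith

lemma hs_norm_taylor {h : X → ℂ} {x0 : X} {r M : ℝ} (hr : 0 < r) (hM : 0 < M)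
    (hh : AnalyticOnNhd ℂ h (ball x0 r)) (hb : ∀ x ∈ ball x0 r, ‖h x‖ ≤ M) (j : ℕ) :
    ‖((j.factorial : ℂ)⁻¹) • iteratedFDeriv ℂ j h x0‖ ≤ M * (18 / r) ^ j := by
  rw [norm_smul]
  have h1 := hs_norm_iteratedFDeriv hr hM hh hb j
  have h2 : (j:ℝ) ^ j / j.factorial ≤ 3 ^ j := by
    refine (Real.pow_div_factorial_le_exp (j:ℝ) (by positivity) j).trans ?_
    rw [← Real.exp_one_pow]
    gcongr
    exact Real.exp_one_lt_three.le
  have hf : (0:ℝ) < j.factorial := by exact_mod_cast j.factorial_pos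
  calc ‖(j.factorial : ℂ)⁻¹‖ * ‖iteratedFDeriv ℂ j h x0‖
      ≤ (j.factorial : ℝ)⁻¹ * (M * (6 * j / r) ^ j) := by
        rw [norm_inv, Complex.norm_natCast]; gcongr
    _ = M * (6 / r) ^ j * ((j:ℝ) ^ j / j.factorial) := by
        rw [show 6 * (j:ℝ) / r = (6 / r) * j by ring, mul_pow]; field_simp
    _ ≤ M * (6 / r) ^ j * 3 ^ j := by gcongr
    _ = M * (18 / r) ^ j := by rw [mul_assoc, ← mul_pow]; congr 2; ring

lemma hs_hasSum_taylor {h : X → ℂ} {x0 : X} {r : ℝ}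
    (hh : AnalyticOnNhd ℂ h (ball x0 r)) {y : X} (hy : 2 * ‖y‖ < r) :
    HasSum (fun j : ℕ => (((j.factorial : ℂ)⁻¹) • iteratedFDeriv ℂ j h x0) (fun _ => y))
      (h (x0 + y)) := by
  have hmem : ∀ t ∈ ball (0:ℂ) 2, x0 + t • y ∈ ball x0 r := by
    intro t ht
    rw [mem_ball_zero_iff] at ht
    rw [mem_ball, dist_eq_norm, add_sub_cancel_left, norm_smul]
    nlinarith [norm_nonneg y]
  have hd : DifferentiableOn ℂ (fun t : ℂ => h (x0 + t • y)) (ball 0 2) := by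
    intro t ht
    have h1 : DifferentiableAt ℂ h (x0 + t • y) := (hh _ (hmem t ht)).differentiableAt
    have h2 : DifferentiableAt ℂ (fun t : ℂ => x0 + t • y) t := by fun_prop
    exact (h1.comp t h2).differentiableWithinAt
  have := Complex.hasSum_taylorSeries_on_ball (z := 1) hd (by simp)
  simp only [sub_zero, one_pow, one_smul] at this
  have e : (fun j : ℕ => (((j.factorial : ℂ)⁻¹) • iteratedFDeriv ℂ j h x0) (fun _ => y))
      = fun j : ℕ => (j.factorial : ℂ)⁻¹ • iteratedDeriv j (fun t : ℂ => h (x0 + t • y)) 0 := by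
    funext j
    rw [hs_iteratedDeriv_line isOpen_ball hh x0 y j 0 (hmem 0 (by simp))]
    simp
  rw [e]
  exact this

lemma hs_analyticAt_tsum {h : ℕ → X → ℂ} {x0 : X} {r K : ℝ} (hr : 0 < r) (hK : 0 < K)
    (hh : ∀ n, AnalyticOnNhd ℂ (h n) (ball x0 r))
    (hb : ∀ n, ∀ x ∈ ball x0 r, ‖h n x‖ ≤ K * (1 / 2) ^ n) :
    AnalyticAt ℂ (fun x => ∑' n, h n x) x0 := by
  let q : ℕ → FormalMultilinearSeries ℂ X ℂ := fun n j =>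
    ((j.factorial : ℂ)⁻¹) • iteratedFDeriv ℂ j (h n) x0
  have hq : ∀ n j, ‖q n j‖ ≤ K * (1 / 2) ^ n * (18 / r) ^ j := fun n j =>
    hs_norm_taylor hr (by positivity) (hh n) (hb n) j
  have hgeo : Summable (fun n : ℕ => ((1:ℝ) / 2) ^ n) :=
    summable_geometric_of_lt_one (by norm_num) (by norm_num)
  have hsum : ∀ j, Summable (fun n => q n j) := fun j =>
    Summable.of_norm_bounded ((hgeo.mul_left K).mul_right ((18 / r) ^ j)) (fun n => hq n j)
  let p : FormalMultilinearSeries ℂ X ℂ := fun j => ∑' n, q n j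
  have hp : ∀ j, ‖p j‖ ≤ (∑' n : ℕ, K * (1 / 2) ^ n) * (18 / r) ^ j := by
    intro j
    rw [← tsum_mul_right]
    exact tsum_of_norm_bounded ((hgeo.mul_left K).mul_right ((18 / r) ^ j)).hasSum
      (fun n => hq n j)
  have hρ : 0 < r / 36 := by positivity
  refine ⟨p, ENNReal.ofReal (r / 36), ?_, by simpa using hρ, ?_⟩
  · apply FormalMultilinearSeries.le_radius_of_bound (r := (r / 36).toNNReal) p
      (∑' n : ℕ, K * (1 / 2) ^ n)
    intro j
    rw [Real.coe_toNNReal _ hρ.le]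
    have h0 : 0 ≤ ∑' n : ℕ, K * (1 / 2 : ℝ) ^ n := tsum_nonneg (fun n => by positivity)
    calc ‖p j‖ * (r / 36) ^ j
        ≤ ((∑' n : ℕ, K * (1 / 2) ^ n) * (18 / r) ^ j) * (r / 36) ^ j := by
          gcongr; exact hp j
      _ = (∑' n : ℕ, K * (1 / 2) ^ n) * (1 / 2) ^ j := by
          rw [mul_assoc, ← mul_pow]; congr 2; field_simp; norm_num
      _ ≤ _ := mul_le_of_le_one_right h0 (pow_le_one₀ (by norm_num) (by norm_num))
  · intro y hy
    have hy' : ‖y‖ < r / 36 := by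
      rw [Metric.eball_ofReal] at hy
      simpa using hy
    have hbd : ∀ n j, ‖q n j (fun _ => y)‖ ≤ K * (1 / 2) ^ n * (1 / 2) ^ j := by
      intro n j
      refine ((q n j).le_opNorm _).trans ?_
      simp only [Finset.prod_const, Finset.card_univ, Fintype.card_fin]
      calc ‖q n j‖ * ‖y‖ ^ j ≤ K * (1 / 2) ^ n * (18 / r) ^ j * (r / 36) ^ j := by
            gcongr; exact hq n j
        _ = _ := by rw [mul_assoc, ← mul_pow]; congr 2; field_simp; norm_num
    have hS : Summable (fun z : ℕ × ℕ => q z.1 z.2 (fun _ => y)) := by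
      refine Summable.of_norm_bounded
        (Summable.mul_of_nonneg (hgeo.mul_left K) hgeo (fun n => by positivity)
          (fun n => by positivity)) (fun z => hbd z.1 z.2)
    have hrow : ∀ n, HasSum (fun j => q n j (fun _ => y)) (h n (x0 + y)) := fun n =>
      hs_hasSum_taylor (hh n) (by linarith)
    have hcol : ∀ j, HasSum (fun n => q n j (fun _ => y)) (p j (fun _ => y)) := fun j =>
      ContinuousMultilinearMap.hasSum_eval (hsum j).hasSum (fun _ => y)
    have h1 := hS.hasSum.prod_fiberwise hrow
    have hS2 := hS.prod_symm.hasSum.prod_fiberwise hcol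
    have h3 : ∑' z : ℕ × ℕ, q z.swap.1 z.swap.2 (fun _ => y)
        = ∑' z : ℕ × ℕ, q z.1 z.2 (fun _ => y) :=
      (Equiv.prodComm ℕ ℕ).tsum_eq (fun z : ℕ × ℕ => q z.1 z.2 (fun _ => y))
    rw [h3] at hS2
    rw [← h1.tsum_eq] at hS2
    exact hS2
end HS
open MeasureTheory

lemma hs_jensen {h : ℂ → ℂ} {c : ℂ} {r : ℝ} (hr : 0 < r)
    (hh : AnalyticOnNhd ℂ h (closedBall c r)) (hc : h c ≠ 0) :
    Real.log ‖h c‖ ≤ Real.circleAverage (fun z => Real.log ‖h z‖) c r := by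
  have habs : |r| = r := abs_of_pos hr
  rw [AnalyticOnNhd.circleAverage_log_norm hr.ne' (by rwa [habs]) hc]
  have : 0 ≤ ∑ᶠ u, (MeromorphicOn.divisor h (closedBall c |r|) u : ℝ)
      * Real.log (r * ‖c - u‖⁻¹) := by
    apply finsum_nonneg
    intro u
    by_cases hu : u ∈ closedBall c |r|
    · apply mul_nonneg
      · have := MeromorphicOn.AnalyticOnNhd.divisor_nonneg (f := h) (U := closedBall c |r|)
          (by rwa [habs]) u
        exact_mod_cast this
      · by_cases huc : u = c
        · simp [huc]
        · apply Real.log_nonneg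
          rw [habs, mem_closedBall, dist_comm, dist_eq_norm] at hu
          have : 0 < ‖c - u‖ := norm_pos_iff.2 (sub_ne_zero.2 (Ne.symm huc))
          rw [← div_eq_mul_inv, le_div_iff₀ this]; linarith
    · rw [Function.locallyFinsuppWithin.apply_eq_zero_of_notMem _ hu]; simp
  linarith

lemma hs_submean {h : ℂ → ℂ} {c : ℂ} {r : ℝ} (hr : 0 < r)
    (hh : AnalyticOnNhd ℂ h (closedBall c r)) :
    Real.posLog ‖h c‖ ≤ Real.circleAverage (fun z => Real.posLog ‖h z‖) c r := by
  have hint : CircleIntegrable (fun z => Real.posLog ‖h z‖) c r :=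
    ((Real.continuous_posLog.comp_continuousOn hh.continuousOn.norm).mono
      sphere_subset_closedBall).circleIntegrable hr.le
  have h1 : 0 ≤ Real.circleAverage (fun z => Real.posLog ‖h z‖) c r := by
    apply Real.circleAverage_nonneg_of_nonneg
    intro x _
    exact Real.posLog_nonneg
  rw [Real.posLog_def]
  apply max_le h1
  by_cases hne : h c = 0
  · simpa [hne] using h1
  refine (hs_jensen hr hh hne).trans ?_
  apply Real.circleAverage_mono _ hint
  · intro x hx
    exact le_max_right _ _
  · apply MeromorphicOn.circleIntegrable_log_norm
    rw [abs_of_pos hr]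
    exact (hh.mono sphere_subset_closedBall).meromorphicOn

lemma hs_two_constants_zero {h : ℂ → ℂ} {s L : ℝ} (hs : 0 < s) (hL : 0 ≤ L)
    (hh : AnalyticOnNhd ℂ h (closedBall 0 s)) (hb : ∀ z ∈ closedBall 0 s, ‖h z‖ ≤ Real.exp L)
    {T : Set ℂ} (hT : T ⊆ ball 0 s) (hTb : ∀ z ∈ T, ‖h z‖ ≤ 1) :
    ENNReal.ofReal L * volume T
      ≤ ENNReal.ofReal (2 * Real.pi * s ^ 2 * (L - Real.posLog ‖h 0‖)) := by
  have hpos : ∀ z ∈ closedBall (0:ℂ) s, Real.posLog ‖h z‖ ≤ L := by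
    intro z hz
    have := Real.posLog_le_posLog (norm_nonneg _) (hb z hz)
    refine this.trans (le_of_eq ?_)
    rw [Real.posLog_def]
    change max 0 (Real.log (Real.exp L)) = L
    rw [Real.log_exp, max_eq_right hL]
  set v : ℂ → ℝ≥0∞ := fun z => ENNReal.ofReal (L - Real.posLog ‖h z‖) with hv
  have hcont : ContinuousOn (fun z => L - Real.posLog ‖h z‖) (closedBall 0 s) :=
    continuousOn_const.sub (Real.continuous_posLog.comp_continuousOn hh.continuousOn.norm)
  have hvc : ContinuousOn v (closedBall 0 s) :=
    ENNReal.continuous_ofReal.comp_continuousOn hcont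
  classical
  set V : ℂ → ℝ≥0∞ := (ball (0:ℂ) s).indicator v with hV
  have hVm : Measurable V := by
    rw [hV, ← Set.piecewise_eq_indicator]
    apply ContinuousOn.measurable_piecewise _ continuousOn_const measurableSet_ball
    exact hvc.mono ball_subset_closedBall
  have h1 : ENNReal.ofReal L * volume T ≤ ∫⁻ z, V z := by
    refine le_trans ?_ (mul_meas_ge_le_lintegral hVm (ENNReal.ofReal L))
    gcongr
    intro z hz
    simp only [mem_ofPred_eq, hV, indicator_of_mem (hT hz), hv]
    have : Real.posLog ‖h z‖ = 0 := by
      rw [Real.posLog_eq_zero_iff, abs_of_nonneg (norm_nonneg _)]; exact hTb z hz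
    simp [this]
  refine h1.trans ?_
  have hv0 : 0 ≤ L - Real.posLog ‖h 0‖ := sub_nonneg.2 (hpos 0 (by simp [hs.le]))
  have hpm : Measurable fun p : ℝ × ℝ => Complex.polarCoord.symm p := by
    simp only [Complex.polarCoord_symm_apply]
    fun_prop
  rw [← Complex.lintegral_comp_polarCoord_symm]
  change ∫⁻ p in Set.Ioi (0 : ℝ) ×ˢ Set.Ioo (-Real.pi) Real.pi, _ ≤ _
  rw [Measure.volume_eq_prod, ← Measure.prod_restrict, lintegral_prod _ (by
    apply Measurable.aemeasurable
    exact (ENNReal.measurable_ofReal.comp measurable_fst).mul (hVm.comp hpm))]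
  have hinner : ∀ r ∈ Set.Ioi (0:ℝ), ∫⁻ θ in Set.Ioo (-Real.pi) Real.pi,
      ENNReal.ofReal r • V (Complex.polarCoord.symm (r, θ)) ≤
      (Set.Ioo 0 s).indicator (fun _ => ENNReal.ofReal s *
        ENNReal.ofReal (2 * Real.pi * (L - Real.posLog ‖h 0‖))) r := by
    intro r hr
    have hr0 : (0:ℝ) < r := hr
    by_cases hrs : r < s
    · rw [indicator_of_mem (show r ∈ Set.Ioo 0 s from ⟨hr0, hrs⟩)]
      simp only [smul_eq_mul]
      rw [lintegral_const_mul' _ _ ENNReal.ofReal_ne_top]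
      gcongr
      have hsub : closedBall (0:ℂ) r ⊆ closedBall 0 s := closedBall_subset_closedBall hrs.le
      have hpc : ∀ θ : ℝ, Complex.polarCoord.symm (r, θ) = circleMap 0 r θ := by
        intro θ
        rw [Complex.polarCoord_symm_apply, circleMap_zero, Complex.exp_mul_I]
        simp
      have hcm : ∀ θ : ℝ, circleMap 0 r θ ∈ ball (0:ℂ) s := by
        intro θ
        simp [abs_of_pos hr0, hrs]
      have hVe : ∀ θ : ℝ, V (Complex.polarCoord.symm (r, θ))
          = ENNReal.ofReal (L - Real.posLog ‖h (circleMap 0 r θ)‖) := by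
        intro θ
        rw [hpc, hV, indicator_of_mem (hcm θ)]
      simp only [hVe]
      have hcθ : Continuous (fun θ : ℝ => L - Real.posLog ‖h (circleMap 0 r θ)‖) :=
        hcont.comp_continuous (continuous_circleMap 0 r)
          (fun θ => ball_subset_closedBall (hcm θ))
      rw [← ofReal_integral_eq_lintegral_ofReal]
      · apply ENNReal.ofReal_le_ofReal
        have hsm := hs_submean hr0 (hh.mono hsub)
        have hpl : Continuous (fun θ : ℝ => Real.posLog ‖h (circleMap 0 r θ)‖) := by
          have := (continuous_const (y := L)).sub hcθ
          refine this.congr (fun θ => ?_)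
          simp
        rw [← integral_Ioc_eq_integral_Ioo, ← intervalIntegral.integral_of_le
          (by linarith [Real.pi_pos])]
        rw [intervalIntegral.integral_sub (by simp) (hpl.intervalIntegrable _ _)]
        have h3 : Real.circleAverage (fun z => Real.posLog ‖h z‖) 0 r = (2 * Real.pi)⁻¹ *
            ∫ θ in (-Real.pi)..Real.pi, Real.posLog ‖h (circleMap 0 r θ)‖ := by
          rw [Real.circleAverage_eq_integral_add (-Real.pi), smul_eq_mul,
            intervalIntegral.integral_comp_add_right
              (fun θ => Real.posLog ‖h (circleMap 0 r θ)‖)]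
          congr 2 <;> ring
        rw [h3] at hsm
        have hpi := Real.pi_pos
        have h4 : 2 * Real.pi * Real.posLog ‖h 0‖ ≤
            ∫ θ in (-Real.pi)..Real.pi, Real.posLog ‖h (circleMap 0 r θ)‖ := by
          rwa [inv_mul_eq_div, le_div_iff₀ (by positivity), mul_comm] at hsm
        simp only [intervalIntegral.integral_const, smul_eq_mul]
        linarith
      · exact hcθ.continuousOn.integrableOn_Icc.mono_set Ioo_subset_Icc_self
      · exact Eventually.of_forall (fun θ => sub_nonneg.2 (hpos _ (ball_subset_closedBall (hcm θ))))
    · rw [indicator_of_notMem (fun h' => hrs h'.2)]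
      have : ∀ θ : ℝ, V (Complex.polarCoord.symm (r, θ)) = 0 := by
        intro θ
        rw [hV, indicator_of_notMem]
        rw [mem_ball_zero_iff, Complex.norm_polarCoord_symm, abs_of_pos hr0]
        exact hrs
      simp only [this]
      simp
  refine (setLIntegral_mono' measurableSet_Ioi hinner).trans ?_
  refine (setLIntegral_le_lintegral _ _).trans ?_
  rw [lintegral_indicator measurableSet_Ioo, setLIntegral_const, Real.volume_Ioo, sub_zero,
    ← ENNReal.ofReal_mul hs.le, ← ENNReal.ofReal_mul (by positivity)]
  apply ENNReal.ofReal_le_ofReal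
  apply le_of_eq; ring

lemma hs_two_constants {h : ℂ → ℂ} {c : ℂ} {s L B : ℝ} (hs : 0 < s) (hL : 0 ≤ L)
    (hh : AnalyticOnNhd ℂ h (closedBall c s))
    (hb : ∀ z ∈ closedBall c s, ‖h z‖ ≤ Real.exp B)
    {T : Set ℂ} (hT : T ⊆ ball c s) (hTb : ∀ z ∈ T, ‖h z‖ ≤ Real.exp (B - L))
    {η : ℝ} (hη0 : 0 ≤ η) (hη : ENNReal.ofReal η ≤ volume T) :
    ‖h c‖ ≤ Real.exp (B - L * η / (2 * Real.pi * s ^ 2)) := by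
  have hpi := Real.pi_pos
  have hE : ‖((Real.exp (L - B) : ℝ) : ℂ)‖ = Real.exp (L - B) := by
    rw [Complex.norm_real, Real.norm_eq_abs, abs_of_pos (Real.exp_pos _)]
  have hcb : ∀ z ∈ closedBall (0:ℂ) s, c + z ∈ closedBall c s := by
    intro z hz; simpa using hz
  set g : ℂ → ℂ := fun z => ((Real.exp (L - B) : ℝ) : ℂ) * h (c + z) with hg
  have hgn : ∀ z, ‖g z‖ = Real.exp (L - B) * ‖h (c + z)‖ := by
    intro z; rw [hg]; simp only [norm_mul, hE]
  have hga : AnalyticOnNhd ℂ g (closedBall 0 s) := by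
    apply analyticOnNhd_const.mul
    intro z hz
    have h1 : AnalyticAt ℂ h (c + z) := hh _ (hcb z hz)
    have h2 : AnalyticAt ℂ (fun z : ℂ => c + z) z := analyticAt_const.add analyticAt_id
    exact AnalyticAt.fun_comp h1 h2
  have key := hs_two_constants_zero (T := (fun z => c + z) ⁻¹' T) hs hL hga ?_ ?_ ?_
  · rw [measure_preimage_add] at key
    have key2 : ENNReal.ofReal (L * η) ≤
        ENNReal.ofReal (2 * Real.pi * s ^ 2 * (L - Real.posLog ‖g 0‖)) := by
      rw [ENNReal.ofReal_mul hL]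
      exact le_trans (by gcongr) key
    rw [ENNReal.ofReal_le_ofReal_iff'] at key2
    rcases key2 with k | k
    · have hxL : Real.log ‖g 0‖ ≤ L - L * η / (2 * Real.pi * s ^ 2) := by
        have h1 : Real.log ‖g 0‖ ≤ Real.posLog ‖g 0‖ := le_max_right _ _
        have h2 : L * η / (2 * Real.pi * s ^ 2) ≤ L - Real.posLog ‖g 0‖ := by
          rw [div_le_iff₀ (by positivity)]; linarith
        linarith
      rcases eq_or_lt_of_le (norm_nonneg (h c)) with h0 | h0
      · rw [← h0]; positivity
      · rw [hgn, add_zero, Real.log_mul (Real.exp_pos _).ne' h0.ne', Real.log_exp] at hxL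
        rw [← Real.log_le_iff_le_exp h0]
        linarith
    · have : L * η = 0 := le_antisymm k (by positivity)
      rw [this]
      simpa using hb c (mem_closedBall_self hs.le)
  · intro z hz
    rw [hgn]
    calc _ ≤ Real.exp (L - B) * Real.exp B := by gcongr; exact hb _ (hcb z hz)
      _ = _ := by rw [← Real.exp_add]; congr 1; ring
  · intro z hz
    have := hT hz
    simpa using this
  · intro z hz
    rw [hgn]
    calc _ ≤ Real.exp (L - B) * Real.exp (B - L) := by gcongr; exact hTb _ hz
      _ = _ := by rw [← Real.exp_add, ← Real.exp_zero]; congr 1; ring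

/-- The Hartogs lemma on the disc. -/
lemma hs_hartogs {h : ℕ → ℂ → ℂ} (hh : ∀ n, AnalyticOnNhd ℂ (h n) (closedBall 0 3))
    {M C : ℝ} (hb : ∀ n, ∀ z ∈ closedBall (0:ℂ) 3, ‖h n z‖ ≤ M * C ^ n) (hC : 0 ≤ C)
    {E : Set ℂ} (hE : IsOpen E) (hEne : E.Nonempty) (hE1 : E ⊆ ball 0 1)
    (hdec : ∀ z ∈ E, ∀ R : ℝ, 0 < R → ∃ K, ∀ n, ‖h n z‖ * R ^ n ≤ K) (R : ℝ) (hR : 0 < R) :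
    ∃ K, ∀ n, ∀ z ∈ closedBall (0:ℂ) 1, ‖h n z‖ * R ^ n ≤ K := by
  obtain ⟨η, hη0, hη⟩ : ∃ η : ℝ, 0 < η ∧ ENNReal.ofReal η < volume E := by
    have := hE.measure_pos volume hEne
    obtain ⟨q, hq0, hq⟩ := ENNReal.lt_iff_exists_nnreal_btwn.1 this
    refine ⟨q, by simpa using hq0, by simpa using hq⟩
  set a : ℝ := Real.log (max C 1) with ha
  have ha0 : 0 ≤ a := Real.log_nonneg (le_max_right _ _)
  have hCa : C ≤ Real.exp a := by
    rw [ha, Real.exp_log (by positivity)]; exact le_max_left _ _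
  have hpi := Real.pi_pos
  obtain ⟨ρ, hρ0, hρ⟩ : ∃ ρ : ℝ, 0 ≤ ρ ∧
      a + Real.log R ≤ (a + ρ) * η / (2 * Real.pi * 2 ^ 2) := by
    refine ⟨|a + Real.log R| * (2 * Real.pi * 2 ^ 2) / η, by positivity, ?_⟩
    have h1 : |a + Real.log R| * (2 * Real.pi * 2 ^ 2) / η * η / (2 * Real.pi * 2 ^ 2)
      = |a + Real.log R| := by field_simp
    rw [add_mul, add_div, h1]
    have : 0 ≤ a * η / (2 * Real.pi * 2 ^ 2) := by positivity
    linarith [le_abs_self (a + Real.log R)]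
  let T : ℕ → Set ℂ := fun k => {z | z ∈ E ∧ ∀ n, ‖h n z‖ * Real.exp ρ ^ n ≤ k}
  have hTmono : Monotone T := by
    intro k l hkl z hz
    exact ⟨hz.1, fun n => (hz.2 n).trans (by exact_mod_cast hkl)⟩
  have hTU : ⋃ k, T k = E := by
    ext z
    simp only [mem_iUnion]
    constructor
    · rintro ⟨k, hk⟩; exact hk.1
    · intro hz
      obtain ⟨K, hK⟩ := hdec z hz (Real.exp ρ) (Real.exp_pos _)
      obtain ⟨k, hk⟩ := exists_nat_ge K
      exact ⟨k, hz, fun n => (hK n).trans hk⟩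
  obtain ⟨k, hk⟩ : ∃ k, ENNReal.ofReal η < volume (T k) := by
    have := tendsto_measure_iUnion_atTop (μ := volume) hTmono
    rw [hTU] at this
    exact (this.eventually (lt_mem_nhds hη)).exists
  set b : ℝ := Real.log (max (max M k) 1) with hbdef
  have hbe : Real.exp b = max (max M k) 1 := by
    rw [hbdef, Real.exp_log (by positivity)]
  refine ⟨Real.exp b, fun n z hz => ?_⟩
  rw [mem_closedBall_zero_iff] at hz
  have hsub : closedBall z 2 ⊆ closedBall (0:ℂ) 3 := by
    apply closedBall_subset_closedBall'
    rw [dist_zero_right]; linarith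
  have key := hs_two_constants (h := h n) (c := z) (s := 2) (L := n * (a + ρ)) (B := b + n * a)
    (by norm_num) (by positivity) ((hh n).mono hsub) ?_ (T := T k) ?_ ?_ hη0.le hk.le
  · have hRe : R = Real.exp (Real.log R) := (Real.exp_log hR).symm
    calc ‖h n z‖ * R ^ n
        ≤ Real.exp (b + n * a - n * (a + ρ) * η / (2 * Real.pi * 2 ^ 2)) *
          Real.exp (n * Real.log R) := by
          rw [Real.exp_nat_mul, ← hRe]; gcongr
      _ = Real.exp (b + n * ((a + Real.log R) - (a + ρ) * η / (2 * Real.pi * 2 ^ 2))) := by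
          rw [← Real.exp_add]; congr 1; ring
      _ ≤ Real.exp b := by
          apply Real.exp_le_exp.2
          have : (n:ℝ) * ((a + Real.log R) - (a + ρ) * η / (2 * Real.pi * 2 ^ 2)) ≤ 0 :=
            mul_nonpos_of_nonneg_of_nonpos (by positivity) (by linarith)
          linarith
  · intro w hw
    refine (hb n w (hsub hw)).trans ?_
    rw [Real.exp_add, Real.exp_nat_mul, hbe]
    gcongr
    exact (le_max_left _ _).trans (le_max_left _ _)
  · intro w hw
    have h1 := hE1 hw.1
    rw [mem_ball_zero_iff] at h1
    rw [mem_ball, dist_eq_norm]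
    have := norm_sub_le w z
    linarith
  · intro w hw
    have h1 := hw.2 n
    have h2 : (k:ℝ) ≤ Real.exp b := by
      rw [hbe]; exact (le_max_right _ _).trans (le_max_left _ _)
    rw [show b + n * a - n * (a + ρ) = b - n * ρ by ring, Real.exp_sub, Real.exp_nat_mul,
      le_div_iff₀ (by positivity)]
    exact h1.trans h2

section HS2
variable {X : Type*} [NormedAddCommGroup X] [NormedSpace ℂ X]

lemma hs_line {U : Set X} {h : ℕ → X → ℂ} (hh : ∀ n, AnalyticOnNhd ℂ (h n) U)
    (hloc : ∀ x ∈ U, ∃ M C : ℝ, ∀ᶠ y in 𝓝 x, ∀ n, ‖h n y‖ ≤ M * C ^ n)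
    {x y : X} (hxy : ∀ t : ℂ, ‖t‖ ≤ 3 → x + t • y ∈ U)
    {E : Set ℂ} (hE : IsOpen E) (hEne : E.Nonempty) (hE1 : E ⊆ ball 0 1)
    (hdec : ∀ t ∈ E, ∀ R : ℝ, 0 < R → ∃ K, ∀ n, ‖h n (x + t • y)‖ * R ^ n ≤ K)
    (R : ℝ) (hR : 0 < R) :
    ∃ K, ∀ n, ∀ t : ℂ, ‖t‖ ≤ 1 → ‖h n (x + t • y)‖ * R ^ n ≤ K := by
  have hlc : Continuous (fun t : ℂ => x + t • y) := by fun_prop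
  obtain ⟨M, C, hM, hC, hMC⟩ : ∃ M C : ℝ, 0 ≤ M ∧ 0 ≤ C ∧ ∀ t ∈ closedBall (0:ℂ) 3, ∀ n,
      ‖h n (x + t • y)‖ ≤ M * C ^ n := by
    refine (isCompact_closedBall (0:ℂ) 3).induction_on
      (p := fun s => ∃ M C : ℝ, 0 ≤ M ∧ 0 ≤ C ∧ ∀ t ∈ s, ∀ n,
      ‖h n (x + t • y)‖ ≤ M * C ^ n) ⟨0, 0, le_rfl, le_rfl, by simp⟩ ?_ ?_ ?_
    · rintro s t hst ⟨M, C, hM, hC, H⟩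
      exact ⟨M, C, hM, hC, fun u hu => H u (hst hu)⟩
    · rintro s t ⟨M, C, hM, hC, H⟩ ⟨M', C', hM', hC', H'⟩
      refine ⟨max M M', max C C', by positivity, by positivity, ?_⟩
      rintro u (hu | hu) n
      · refine (H u hu n).trans ?_
        gcongr <;> exact le_max_left _ _
      · refine (H' u hu n).trans ?_
        gcongr <;> exact le_max_right _ _
    · intro t ht
      obtain ⟨M, C, H⟩ := hloc _ (hxy t (by simpa using ht))
      refine ⟨_, mem_nhdsWithin_of_mem_nhds (hlc.continuousAt.eventually H), |M|, |C|,
        abs_nonneg _, abs_nonneg _, ?_⟩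
      intro u hu n
      refine (hu n).trans ((le_abs_self _).trans ?_)
      rw [abs_mul, abs_pow]
  obtain ⟨K, hK⟩ := hs_hartogs (h := fun n t => h n (x + t • y)) (fun n t ht => by
      have h1 : AnalyticAt ℂ (h n) (x + t • y) := hh n _ (hxy t (by simpa using ht))
      have h2 : AnalyticAt ℂ (fun t : ℂ => x + t • y) t :=
        analyticAt_const.add (analyticAt_id.smul analyticAt_const)
      exact AnalyticAt.fun_comp h1 h2) (fun n t ht => hMC t ht n) hC hE hEne hE1 hdec R hR
  exact ⟨K, fun n t ht => hK n t (by simpa using ht)⟩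

lemma hs_propagate {U : Set X} (hU : IsOpen U) (hUc : IsPreconnected U) {h : ℕ → X → ℂ}
    (hh : ∀ n, AnalyticOnNhd ℂ (h n) U)
    (hloc : ∀ x ∈ U, ∃ M C : ℝ, ∀ᶠ y in 𝓝 x, ∀ n, ‖h n y‖ ≤ M * C ^ n)
    {V : Set X} (hV : IsOpen V) (hVne : (U ∩ V).Nonempty)
    (hdec : ∀ x ∈ V, ∀ R : ℝ, 0 < R → ∃ K, ∀ n, ‖h n x‖ * R ^ n ≤ K) :
    ∀ x ∈ U, ∀ R : ℝ, 0 < R → ∃ K, ∀ n, ‖h n x‖ * R ^ n ≤ K := by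
  set W : Set X := interior {x | ∀ R : ℝ, 0 < R → ∃ K, ∀ n, ‖h n x‖ * R ^ n ≤ K} with hW
  have hWo : IsOpen W := isOpen_interior
  have hVW : V ⊆ W := interior_maximal hdec hV
  have : U ⊆ W := by
    refine hUc.subset_of_closure_inter_subset hWo (hVne.mono (inter_subset_inter_right _ hVW)) ?_
    rintro x0 ⟨hx0, hx0U⟩
    obtain ⟨r, hr, hrU⟩ := Metric.isOpen_iff.1 hU x0 hx0U
    obtain ⟨x', hx'W, hx'⟩ := Metric.mem_closure_iff.1 hx0 (r / 20) (by positivity)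
    rw [hW, mem_interior]
    refine ⟨ball x0 (r / 20), ?_, isOpen_ball, mem_ball_self (by positivity)⟩
    intro x hx R hR
    have hx0' : ‖x - x0‖ < r / 20 := by rwa [← dist_eq_norm]
    have hx'' : ‖x0 - x'‖ < r / 20 := by rwa [← dist_eq_norm]
    have hd : ‖x' - x‖ < r / 10 := by
      have : x' - x = -((x - x0) + (x0 - x')) := by abel
      rw [this, norm_neg]
      linarith [norm_add_le (x - x0) (x0 - x')]
    set y : X := (2:ℂ) • (x' - x) with hy
    have hyn : ‖y‖ ≤ r / 5 := by
      rw [hy, norm_smul]; simp only [Complex.norm_ofNat]; linarith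
    have hc : Continuous (fun t : ℂ => x + t • y) := by fun_prop
    obtain ⟨K, hK⟩ := hs_line hh hloc (x := x) (y := y) (fun t ht => hrU (by
        rw [mem_ball, dist_eq_norm]
        have e : x + t • y - x0 = (x - x0) + t • y := by abel
        rw [e]
        have h1 := norm_add_le (x - x0) (t • y)
        rw [norm_smul] at h1
        have h2 : ‖t‖ * ‖y‖ ≤ 3 * (r / 5) := by gcongr
        linarith)) (E := ball 0 1 ∩ (fun t : ℂ => x + t • y) ⁻¹' W)
      (isOpen_ball.inter (hWo.preimage hc))
      ⟨1 / 2, by simp; norm_num, by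
        simp only [mem_preimage, hy, smul_smul]
        norm_num
        exact hx'W⟩ inter_subset_left
      (fun t ht => interior_subset ht.2) R hR
    exact ⟨K, fun n => by simpa using hK n 0 (by simp)⟩
  exact fun x hx => interior_subset (this hx)

lemma hs_uniform [CompleteSpace X] {U : Set X} (hU : IsOpen U) {h : ℕ → X → ℂ}
    (hh : ∀ n, AnalyticOnNhd ℂ (h n) U)
    (hloc : ∀ x ∈ U, ∃ M C : ℝ, ∀ᶠ y in 𝓝 x, ∀ n, ‖h n y‖ ≤ M * C ^ n)
    (hdec : ∀ x ∈ U, ∀ R : ℝ, 0 < R → ∃ K, ∀ n, ‖h n x‖ * R ^ n ≤ K)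
    {x0 : X} (hx0 : x0 ∈ U) (R : ℝ) (hR : 0 < R) :
    ∃ K, ∃ ρ > 0, ball x0 ρ ⊆ U ∧ ∀ x ∈ ball x0 ρ, ∀ n, ‖h n x‖ * R ^ n ≤ K := by
  obtain ⟨s, hs, hsU⟩ := Metric.isOpen_iff.1 hU x0 hx0
  set r : ℝ := s / 5 with hr
  have hr0 : 0 < r := by positivity
  have hmem : ∀ y : X, ‖y‖ < 5 * r → x0 + y ∈ U := by
    intro y hy
    apply hsU
    rw [mem_ball, dist_eq_norm, add_sub_cancel_left]
    rw [hr] at hy; linarith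
  let A : ℕ → Set X := fun k => closedBall 0 r ∩
    {y | ∀ n, ∀ t : ℂ, ‖t‖ ≤ 1 → ‖h n (x0 + t • y)‖ * R ^ n ≤ k}
  have hA : ∀ k, IsClosed (A k) := by
    intro k
    have : A k = closedBall 0 r ∩ ⋂ (n : ℕ) (t : ℂ) (_ : ‖t‖ ≤ 1),
        (closedBall 0 r ∩ (fun y => ‖h n (x0 + t • y)‖ * R ^ n) ⁻¹' (Iic (k:ℝ))) := by
      ext y
      simp only [A, mem_inter_iff, mem_iInter, mem_preimage, mem_Iic, mem_ofPred_eq]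
      constructor
      · rintro ⟨h1, h2⟩; exact ⟨h1, fun n t ht => ⟨h1, h2 n t ht⟩⟩
      · rintro ⟨h1, h2⟩; exact ⟨h1, fun n t ht => (h2 n t ht).2⟩
    rw [this]
    refine isClosed_closedBall.inter (isClosed_iInter fun n => isClosed_iInter fun t =>
      isClosed_iInter fun ht => ?_)
    apply ContinuousOn.preimage_isClosed_of_isClosed _ isClosed_closedBall isClosed_Iic
    apply ContinuousOn.mul _ continuousOn_const
    apply ContinuousOn.norm
    apply (hh n).continuousOn.comp (by fun_prop)
    intro y hy
    apply hmem
    rw [mem_closedBall_zero_iff] at hy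
    rw [norm_smul]
    nlinarith [norm_nonneg y, norm_nonneg t]
  let B : Option ℕ → Set X := fun o => o.elim (ball 0 r)ᶜ A
  have hB : ∀ o, IsClosed (B o) := by
    rintro (_ | k)
    · exact isOpen_ball.isClosed_compl
    · exact hA k
  have hBU : ⋃ o, B o = univ := by
    rw [eq_univ_iff_forall]
    intro y
    rw [mem_iUnion]
    by_cases hy : y ∈ ball 0 r
    · have hy' : ‖y‖ < r := by simpa using hy
      have hline : ∀ t : ℂ, ‖t‖ ≤ 3 → x0 + t • y ∈ U := by
        intro t ht
        apply hmem
        rw [norm_smul]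
        nlinarith [norm_nonneg y, norm_nonneg t]
      obtain ⟨K, hK⟩ := hs_line hh hloc hline (E := ball 0 1) isOpen_ball ⟨0, by simp⟩ subset_rfl
        (fun t ht => hdec _ (hline t (by rw [mem_ball_zero_iff] at ht; linarith))) R hR
      obtain ⟨k, hk⟩ := exists_nat_ge K
      exact ⟨some k, ball_subset_closedBall hy, fun n t ht => (hK n t ht).trans hk⟩
    · exact ⟨none, hy⟩
  have hdense := dense_iUnion_interior_of_closed hB hBU
  obtain ⟨y0, hy0r, hy0⟩ := hdense.inter_open_nonempty (ball 0 r) isOpen_ball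
    ⟨0, mem_ball_self hr0⟩
  rw [mem_iUnion] at hy0
  obtain ⟨o, ho⟩ := hy0
  rcases o with _ | k
  · exact absurd hy0r (interior_subset ho)
  obtain ⟨ρ, hρ, hρA⟩ := Metric.isOpen_iff.1 isOpen_interior y0 ho
  have hρA' : ball y0 ρ ⊆ A k := hρA.trans interior_subset
  have hy0' : ‖y0‖ < r := by simpa using hy0r
  refine ⟨k, min ρ r, by positivity, ?_, ?_⟩
  · intro x hx
    have := hmem (x - x0) (by
      rw [← dist_eq_norm]
      have := (mem_ball.1 hx).trans_le (min_le_right _ _)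
      linarith)
    simpa using this
  intro x hx n
  have hxr : ‖x - x0‖ < r := by
    rw [← dist_eq_norm]; exact (mem_ball.1 hx).trans_le (min_le_right _ _)
  have hxρ : ‖x - x0‖ < ρ := by
    rw [← dist_eq_norm]; exact (mem_ball.1 hx).trans_le (min_le_left _ _)
  have hdiff : DiffContOnCl ℂ (fun t : ℂ => h n (x + t • y0)) (ball 0 1) := by
    apply DifferentiableOn.diffContOnCl
    intro t ht
    have ht' : ‖t‖ ≤ 1 := by
      have := closure_ball_subset_closedBall ht
      simpa using this
    have hU' : x + t • y0 ∈ U := by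
      have := hmem ((x - x0) + t • y0) (by
        have h1 := norm_add_le (x - x0) (t • y0)
        rw [norm_smul] at h1
        nlinarith [norm_nonneg y0, norm_nonneg t])
      rwa [← add_assoc, add_sub_cancel] at this
    have h1 : DifferentiableAt ℂ (h n) (x + t • y0) := (hh n _ hU').differentiableAt
    have h2 : DifferentiableAt ℂ (fun t : ℂ => x + t • y0) t := by fun_prop
    exact (h1.comp t h2).differentiableWithinAt
  have hfin := Complex.norm_le_of_forall_mem_frontier_norm_le (C := k / R ^ n)
    isBounded_ball hdiff ?_ (z := 0) (subset_closure (by simp))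
  · simp only [zero_smul, add_zero] at hfin
    rwa [le_div_iff₀ (by positivity)] at hfin
  · intro t ht
    rw [frontier_ball _ one_ne_zero, mem_sphere_zero_iff_norm] at ht
    have ht0 : t ≠ 0 := by rintro rfl; simp at ht
    have hmemA : y0 + t⁻¹ • (x - x0) ∈ A k := by
      apply hρA'
      rw [mem_ball, dist_eq_norm, add_sub_cancel_left, norm_smul, norm_inv, ht]
      simpa using hxρ
    have := hmemA.2 n t ht.le
    rw [smul_add, smul_smul, mul_inv_cancel₀ ht0, one_smul] at this
    rw [le_div_iff₀ (by positivity)]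
    have e : x + t • y0 = x0 + (t • y0 + (x - x0)) := by abel
    rw [e]; exact this

lemma hs_main [CompleteSpace X] {U : Set X} (hU : IsOpen U) (hUc : IsPreconnected U)
    {h : ℕ → X → ℂ} (hh : ∀ n, AnalyticOnNhd ℂ (h n) U)
    (hloc : ∀ x ∈ U, ∃ M C : ℝ, ∀ᶠ y in 𝓝 x, ∀ n, ‖h n y‖ ≤ M * C ^ n)
    {V : Set X} (hV : IsOpen V) (hVne : (U ∩ V).Nonempty)
    (hdec : ∀ x ∈ V, ∀ R : ℝ, 0 < R → ∃ K, ∀ n, ‖h n x‖ * R ^ n ≤ K) :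
    AnalyticOnNhd ℂ (fun x => ∑' n, h n x) U := by
  intro x0 hx0
  obtain ⟨K, ρ, hρ, hρU, hK⟩ := hs_uniform hU hh hloc
    (hs_propagate hU hUc hh hloc hV hVne hdec) hx0 2 (by norm_num)
  apply hs_analyticAt_tsum hρ (K := max K 1) (by positivity) (fun n => (hh n).mono hρU)
  intro n x hx
  have := (hK x hx n).trans (le_max_left K 1)
  rw [one_div, inv_pow, ← div_eq_mul_inv, le_div_iff₀ (by positivity)]
  exact this

end HS2

section HS3

lemma hs_cauchy {u : ℂ → ℂ} {s ρ C : ℝ} (n : ℕ) (hs : 0 < s) (hsρ : s < ρ)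
    (hd : DifferentiableOn ℂ u (ball 0 ρ)) (hC : ∀ z ∈ sphere (0 : ℂ) s, ‖u z‖ ≤ C) :
    ‖(n.factorial : ℂ)⁻¹ * iteratedDeriv n u 0‖ * s ^ n ≤ C := by
  have h1 : DiffContOnCl ℂ u (ball 0 s) := by
    apply DifferentiableOn.diffContOnCl
    rw [closure_ball _ hs.ne']
    exact hd.mono (closedBall_subset_ball hsρ)
  have h2 := Complex.norm_iteratedDeriv_le_of_forall_mem_sphere_norm_le n hs h1 hC
  have hf : (0 : ℝ) < n.factorial := by positivity
  have hp : 0 < s ^ n := by positivity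
  rw [le_div_iff₀ hp] at h2
  rw [norm_mul, norm_inv, Complex.norm_natCast, mul_assoc, inv_mul_le_iff₀ hf]
  exact h2

variable {E : Type*} [NormedAddCommGroup E] [NormedSpace ℂ E]

lemma hs_slice_diff {f : E × E → ℂ}
    (hf : AnalyticOnNhd ℂ f (ball (0 : E) 1 ×ˢ ball (0 : E) 1)) {z w : E}
    (hz : z ∈ ball (0 : E) 1) {ρ : ℝ} (hρ : ρ * ‖w‖ ≤ 1) (hw : ρ * ‖w‖ < 1 ∨ 0 < ‖w‖) :
    DifferentiableOn ℂ (fun t : ℂ => f (z, t • w)) (ball 0 ρ) := by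
  intro t ht
  have ht' : ‖t‖ < ρ := by simpa using ht
  have hm : (z, t • w) ∈ ball (0 : E) 1 ×ˢ ball (0 : E) 1 := by
    refine ⟨hz, ?_⟩
    simp only [mem_ball_zero_iff, norm_smul]
    rcases hw with h | h
    · exact lt_of_le_of_lt (mul_le_mul_of_nonneg_right ht'.le (norm_nonneg _)) h
    · exact lt_of_lt_of_le (mul_lt_mul_of_pos_right ht' h) hρ
  have h1 : DifferentiableAt ℂ f (z, t • w) := (hf _ hm).differentiableAt
  have h2 : DifferentiableAt ℂ (fun t : ℂ => (z, t • w)) t := by fun_prop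
  exact (DifferentiableAt.comp t h1 h2).differentiableWithinAt

lemma hs_coeff_analytic {f : E × E → ℂ}
    (hf : AnalyticOnNhd ℂ f (ball (0 : E) 1 ×ˢ ball (0 : E) 1)) (n : ℕ) :
    AnalyticOnNhd ℂ (fun p : E × E =>
      (n.factorial : ℂ)⁻¹ * iteratedDeriv n (fun t : ℂ => f (p.1, t • p.2)) 0)
      (ball (0 : E) 1 ×ˢ univ) := by
  let G : (E × E) × ℂ → E × E := fun q => (q.1.1, q.2 • q.1.2)
  have hG : AnalyticOnNhd ℂ G univ := by
    intro q _
    exact (analyticAt_fst.comp analyticAt_fst).prod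
      (analyticAt_snd.smul (analyticAt_snd.comp analyticAt_fst))
  have hGc : Continuous G := by fun_prop
  set W : Set ((E × E) × ℂ) := G ⁻¹' (ball (0 : E) 1 ×ˢ ball (0 : E) 1) with hW
  have hWo : IsOpen W := (isOpen_ball.prod isOpen_ball).preimage hGc
  have hH : AnalyticOnNhd ℂ (fun q => f (G q)) W := by
    intro q hq
    exact (hf _ hq).comp (hG q trivial)
  have hD := hH.iteratedFDeriv n
  have hmem : ∀ p ∈ (ball (0 : E) 1 ×ˢ (univ : Set E)), ((p, 0) : (E × E) × ℂ) ∈ W := by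
    intro p hp
    refine ⟨hp.1, ?_⟩
    simp [G]
  have hA : AnalyticOnNhd ℂ (fun p : E × E =>
      iteratedFDeriv ℂ n (fun q => f (G q)) ((p, 0) : (E × E) × ℂ)
        (fun _ => ((0, 1) : (E × E) × ℂ))) (ball (0 : E) 1 ×ˢ univ) := by
    intro p hp
    have h1 := hD _ (hmem p hp)
    have h2 : AnalyticAt ℂ (fun p : E × E => ((p, 0) : (E × E) × ℂ)) p :=
      analyticAt_id.prod analyticAt_const
    have h3 := AnalyticAt.comp (f := fun p : E × E => ((p, 0) : (E × E) × ℂ)) h1 h2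
    exact ((ContinuousMultilinearMap.apply ℂ (fun _ : Fin n => (E × E) × ℂ) ℂ
      (fun _ => ((0, 1) : (E × E) × ℂ))).analyticAt _).comp h3
  intro p hp
  have hB : AnalyticAt ℂ (fun p : E × E => (n.factorial : ℂ)⁻¹ *
      iteratedFDeriv ℂ n (fun q => f (G q)) ((p, 0) : (E × E) × ℂ)
        (fun _ => ((0, 1) : (E × E) × ℂ))) p := analyticAt_const.mul (hA p hp)
  refine hB.congr ?_
  filter_upwards [(isOpen_ball.prod isOpen_univ).mem_nhds hp] with x hx
  have h0 := hs_iteratedDeriv_line hWo hH ((x, 0) : (E × E) × ℂ) ((0, 1) : (E × E) × ℂ) n 0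
    (by simpa using hmem x hx)
  have e1 : (fun t : ℂ => f (G (((x, 0) : (E × E) × ℂ) + t • ((0, 1) : (E × E) × ℂ))))
      = fun t : ℂ => f (x.1, t • x.2) := by
    funext t
    simp [G]
  rw [e1, zero_smul, add_zero] at h0
  rw [h0]

theorem hs_general [CompleteSpace E] (f : E × E → ℂ)
    (hf : AnalyticOnNhd ℂ f (ball (0 : E) 1 ×ˢ ball (0 : E) 1))
    (z1 : E) (β1 : ℝ) (hβ1 : 0 < β1) (hsub : ball z1 β1 ⊆ ball (0 : E) 1)
    (hext : ∀ z ∈ ball z1 β1, ∃ g : E → ℂ, AnalyticOnNhd ℂ g univ ∧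
        ∀ w ∈ ball (0 : E) 1, g w = f (z, w)) :
    ∃ F : E × E → ℂ, AnalyticOnNhd ℂ F (ball (0 : E) 1 ×ˢ (univ : Set E)) ∧
      ∀ z ∈ ball (0 : E) 1, ∀ w ∈ ball (0 : E) 1, F (z, w) = f (z, w) := by
  let P : ℕ → E × E → ℂ := fun n p =>
    (n.factorial : ℂ)⁻¹ * iteratedDeriv n (fun t : ℂ => f (p.1, t • p.2)) 0
  refine ⟨fun p => ∑' n, P n p, ?_, ?_⟩
  · have hpc : IsPreconnected (ball (0 : E) 1 ×ˢ (univ : Set E)) := by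
      let _ : NormedSpace ℝ E := NormedSpace.restrictScalars ℝ ℂ E
      exact (convex_ball (0 : E) 1).isPreconnected.prod isPreconnected_univ
    refine hs_main (h := P) (V := ball z1 β1 ×ˢ (univ : Set E))
      (isOpen_ball.prod isOpen_univ) hpc (fun n => hs_coeff_analytic hf n) ?_
      (isOpen_ball.prod isOpen_univ)
      ⟨(z1, 0), ⟨hsub (mem_ball_self hβ1), trivial⟩, ⟨mem_ball_self hβ1, trivial⟩⟩ ?_
    · rintro ⟨z0, w0⟩ ⟨hz0, -⟩
      have hz0 : z0 ∈ ball (0 : E) 1 := hz0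
      have hc : ContinuousAt f (z0, 0) :=
        (hf (z0, 0) ⟨hz0, mem_ball_self one_pos⟩).continuousAt
      have hb : ∀ᶠ q in 𝓝 (z0, (0 : E)), ‖f q‖ < ‖f (z0, 0)‖ + 1 :=
        hc.norm.eventually_lt_const (by linarith)
      have hb2 : ∀ᶠ q in 𝓝 (z0, (0 : E)), q ∈ ball (0 : E) 1 ×ˢ ball (0 : E) 1 :=
        (isOpen_ball.prod isOpen_ball).mem_nhds ⟨hz0, mem_ball_self one_pos⟩
      obtain ⟨r, hr, hball⟩ := Metric.eventually_nhds_iff_ball.1 (hb.and hb2)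
      rw [← ball_prod_same] at hball
      set s : ℝ := r / (‖w0‖ + 2) with hs
      have hD : 0 < ‖w0‖ + 2 := by positivity
      have hspos : 0 < s := by positivity
      refine ⟨‖f (z0, 0)‖ + 1, (s / 2)⁻¹, ?_⟩
      have hnear : ∀ᶠ y in 𝓝 (z0, w0), y ∈ ball z0 r ×ˢ ball w0 1 :=
        (isOpen_ball.prod isOpen_ball).mem_nhds ⟨mem_ball_self hr, mem_ball_self one_pos⟩
      filter_upwards [hnear] with y hy n
      obtain ⟨hy1, hy2⟩ := hy
      have hyn : ‖y.2‖ < ‖w0‖ + 1 := by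
        have := norm_sub_norm_le y.2 w0
        rw [mem_ball_iff_norm] at hy2
        linarith
      have hmem : ∀ t : ℂ, ‖t‖ < s → (y.1, t • y.2) ∈ ball z0 r ×ˢ ball (0 : E) r := by
        intro t ht
        refine ⟨hy1, ?_⟩
        simp only [mem_ball_zero_iff, norm_smul]
        calc ‖t‖ * ‖y.2‖ ≤ s * (‖w0‖ + 1) := by gcongr
          _ < s * (‖w0‖ + 2) := by gcongr; norm_num
          _ = r := by rw [hs]; field_simp
      have hd : DifferentiableOn ℂ (fun t : ℂ => f (y.1, t • y.2)) (ball 0 s) := by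
        intro t ht
        have h1 : DifferentiableAt ℂ f (y.1, t • y.2) :=
          (hf _ (hball _ (hmem t (by simpa using ht))).2).differentiableAt
        have h2 : DifferentiableAt ℂ (fun t : ℂ => (y.1, t • y.2)) t := by fun_prop
        exact (DifferentiableAt.comp t h1 h2).differentiableWithinAt
      have hk := hs_cauchy (C := ‖f (z0, 0)‖ + 1) n (half_pos hspos) (half_lt_self hspos) hd (by
        intro t ht
        have ht' : ‖t‖ = s / 2 := by simpa using ht
        exact (hball _ (hmem t (by linarith))).1.le)
      rw [inv_pow, ← div_eq_mul_inv, le_div_iff₀ (by positivity)]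
      exact hk
    · rintro ⟨z, w⟩ ⟨hz, -⟩ R hR
      obtain ⟨g, hg, hgf⟩ := hext z hz
      have hdiff : Differentiable ℂ (fun t : ℂ => g (t • w)) := by
        intro t
        have h1 : DifferentiableAt ℂ g (t • w) := (hg _ trivial).differentiableAt
        have h2 : DifferentiableAt ℂ (fun t : ℂ => t • w) t := by fun_prop
        exact DifferentiableAt.comp t h1 h2
      obtain ⟨K, hK⟩ := (isCompact_sphere (0 : ℂ) R).exists_bound_of_continuousOn
        hdiff.continuous.continuousOn
      refine ⟨K, fun n => ?_⟩
      have hev : (fun t : ℂ => f (z, t • w)) =ᶠ[𝓝 0] fun t : ℂ => g (t • w) := by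
        have hc : ContinuousAt (fun t : ℂ => t • w) 0 := by fun_prop
        have : ∀ᶠ t in 𝓝 (0 : ℂ), t • w ∈ ball (0 : E) 1 :=
          hc (by simpa using ball_mem_nhds (0 : E) one_pos)
        filter_upwards [this] with t ht
        exact (hgf _ ht).symm
      have hk := hs_cauchy n hR (lt_add_one R) hdiff.differentiableOn hK
      simp only [P]
      rw [hev.iteratedDeriv_eq n]
      exact hk
  · intro z hz w hw
    have hw' : ‖w‖ < 1 := by simpa using hw
    have hpos : 0 < 1 + ‖w‖ := by positivity
    have hlt : 2 / (1 + ‖w‖) * ‖w‖ < 1 := by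
      rw [div_mul_eq_mul_div, div_lt_one hpos]; linarith
    have hd := hs_slice_diff hf hz hlt.le (Or.inl hlt)
    have h1 : (1 : ℂ) ∈ ball (0 : ℂ) (2 / (1 + ‖w‖)) := by
      simp only [mem_ball_zero_iff, norm_one]
      rw [lt_div_iff₀ hpos]; linarith
    have := (Complex.hasSum_taylorSeries_on_ball hd h1).tsum_eq
    simpa [P] using this

end HS3

end HSAll


open scoped ENNReal

/-- Hartogs–Siciak extension in `ℓ∞`: if `f` is analytic on `B(0,1) × B(0,1)` in
`ℓ∞ × ℓ∞` and all slices `f(z, ·)` for `z` in some sub-ball `B(z1, β1) ⊆ B(0,1)` extend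
to functions analytic on all of `ℓ∞`, then `f` extends analytically to `B(0,1) × ℓ∞`. -/
theorem hartogs_siciak_lp_infty
    (f : lp (fun _ : ℕ => ℂ) ∞ × lp (fun _ : ℕ => ℂ) ∞ → ℂ)
    (hf : AnalyticOnNhd ℂ f
      (Metric.ball (0 : lp (fun _ : ℕ => ℂ) ∞) 1 ×ˢ Metric.ball (0 : lp (fun _ : ℕ => ℂ) ∞) 1))
    (z1 : lp (fun _ : ℕ => ℂ) ∞) (β1 : ℝ) (hβ1 : 0 < β1)
    (hsub : Metric.ball z1 β1 ⊆ Metric.ball (0 : lp (fun _ : ℕ => ℂ) ∞) 1)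
    (hext : ∀ z ∈ Metric.ball z1 β1,
      ∃ g : lp (fun _ : ℕ => ℂ) ∞ → ℂ, AnalyticOnNhd ℂ g Set.univ ∧
        ∀ w ∈ Metric.ball (0 : lp (fun _ : ℕ => ℂ) ∞) 1, g w = f (z, w)) :
    ∃ F : lp (fun _ : ℕ => ℂ) ∞ × lp (fun _ : ℕ => ℂ) ∞ → ℂ,
      AnalyticOnNhd ℂ F
        (Metric.ball (0 : lp (fun _ : ℕ => ℂ) ∞) 1 ×ˢ (Set.univ : Set (lp (fun _ : ℕ => ℂ) ∞))) ∧
      ∀ z ∈ Metric.ball (0 : lp (fun _ : ℕ => ℂ) ∞) 1,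
        ∀ w ∈ Metric.ball (0 : lp (fun _ : ℕ => ℂ) ∞) 1, F (z, w) = f (z, w) := by
  exact hs_general f hf z1 β1 hβ1 hsub hext
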